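/- Let G be a finite group whose power graph is chordal. Then every induced path in the power graph of G has at most 19 vertices; that is, for every natural number L, if there exists a graph embedding of the path graph on L vertices into the power graph of G, then L ≤ 19. -/

import Mathlib

/-- The power graph of a group: distinct `x` and `y` are adjacent iff one is a power
of the other. -/
def powerGraph (G : Type*) [Group G] : SimpleGraph G :=
  SimpleGraph.fromRel (fun x y => x ∈ Subgroup.zpowers y)

/-- A graph is chordal if it has no induced cycle on at least 4 vertices. -/
def IsChordal {V : Type*} (Γ : SimpleGraph V) : Prop :=
  ∀ n : ℕ, 4 ≤ n → IsEmpty (SimpleGraph.cycleGraph n ↪g Γ)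

/-!
Join two subgroups of prime order when they commute and their orders differ. Sending an edge to a
generator of the cyclic subgroup spanned by its ends embeds the subdivision of this graph into the
power graph, so chordality makes the graph a forest.

Conjugation acts on the forest. A median of a finite tree is moved at most to a neighbour by an
automorphism of the tree, and conjugate subgroups are never adjacent because their orders agree;
hence a median `C` is normalized by the normalizer of every vertex of its component, and
normalizers decrease along paths leaving `C`. Suppose that such a path `C = P₀, …, P₅` is geodesic.
Then `P₃` and `P₅` normalize `P₀`, they commute and have the same prime order `r`. As `P₃P₅` is not
cyclic while `Aut P₀` is, some subgroup of `P₃P₅` of order `r` centralizes `P₀`. It also commutes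
with `P₄`, so `P₀` and `P₄` are at distance two, a contradiction. Thus components have radius at
most four and diameter at most eight.

An induced path on twenty vertices of the power graph alternates between ten small and ten large
cyclic subgroups. The intersection of two consecutive large ones contains a single subgroup of
prime order, since otherwise there would be an induced 4-cycle. Choosing a subgroup of prime order
in each small one, of order prime to the next small one, gives a walk of length nine in the forest
that never backtracks, contradicting the diameter bound.
-/

open SimpleGraph

section Forest

variable {V V' : Type*} {Γ : SimpleGraph V} {Γ' : SimpleGraph V'} {u v w x : V}

theorem dist_getVert_of_length_eq_dist {p : Γ.Walk u v} (hp : p.length = Γ.dist u v) {i : ℕ}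
    (hi : i ≤ p.length) : Γ.dist u (p.getVert i) = i := by
  rw [← length_eq_dist_of_subwalk hp (p.isSubwalk_take i), Walk.take_length, min_eq_left hi]

theorem adj_getVert_iff_of_length_eq_dist {p : Γ.Walk u v} (hp : p.length = Γ.dist u v) {i j : ℕ}
    (hi : i ≤ p.length) (hj : j ≤ p.length) :
    Γ.Adj (p.getVert i) (p.getVert j) ↔ i + 1 = j ∨ j + 1 = i := by
  constructor
  · intro hadj
    have hdist := hadj.diff_dist_adj (u := u)
    rw [dist_getVert_of_length_eq_dist hp hi, dist_getVert_of_length_eq_dist hp hj] at hdist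
    have hij : i ≠ j := fun h => hadj.ne (h ▸ rfl)
    lia
  · rintro (rfl | rfl)
    · exact p.adj_getVert_succ hj
    · exact (p.adj_getVert_succ hi).symm

theorem dist_iso_apply (φ : Γ ≃g Γ') (u v : V) : Γ'.dist (φ u) (φ v) = Γ.dist u v := by
  by_cases h : Γ.Reachable u v
  · apply le_antisymm
    · obtain ⟨p, hp⟩ := h.exists_walk_length_eq_dist
      simpa [hp] using dist_le (p.map φ.toHom)
    · obtain ⟨p, hp⟩ := (φ.reachable_iff.2 h).exists_walk_length_eq_dist
      simpa [hp] using dist_le (p.map φ.symm.toHom)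
  · rw [dist_eq_zero_of_not_reachable h, dist_eq_zero_of_not_reachable (mt φ.reachable_iff.1 h)]

theorem eq_of_adj_of_dist_add_one_eq (hΓ : Γ.IsAcyclic) (hu : Γ.Adj v u) (hw : Γ.Adj v w)
    (hxv : Γ.Reachable x v) (hxu : Γ.dist x u + 1 = Γ.dist x v)
    (hxw : Γ.dist x w + 1 = Γ.dist x v) : u = w := by
  obtain ⟨p, hp⟩ := (hxv.trans hu.reachable).exists_walk_length_eq_dist
  obtain ⟨q, hq⟩ := (hxv.trans hw.reachable).exists_walk_length_eq_dist
  have hp' : (p.concat hu.symm).IsPath :=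
    Walk.isPath_of_length_eq_dist _ (by rw [Walk.length_concat, hp, hxu])
  have hq' : (q.concat hw.symm).IsPath :=
    Walk.isPath_of_length_eq_dist _ (by rw [Walk.length_concat, hq, hxw])
  have hpq := (hΓ.subsingleton_path x v).elim ⟨_, hp'⟩ ⟨_, hq'⟩
  simpa using congrArg (fun r : Γ.Path x v => r.1.penultimate) hpq

theorem dist_eq_of_nonbacktracking (hΓ : Γ.IsAcyclic) {P : ℕ → V} {n : ℕ}
    (hadj : ∀ i < n, Γ.Adj (P i) (P (i + 1))) (hne : ∀ i, i + 2 ≤ n → P i ≠ P (i + 2)) :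
    ∀ i ≤ n, Γ.Reachable (P 0) (P i) ∧ Γ.dist (P 0) (P i) = i := by
  intro i
  induction i using Nat.twoStepInduction with
  | zero => simp
  | one => exact fun h => ⟨(hadj 0 h).reachable, dist_eq_one_iff_adj.2 (hadj 0 h)⟩
  | more i ih ih' =>
    intro hi
    obtain ⟨-, hdist⟩ := ih (by lia)
    obtain ⟨hreach, hdist'⟩ := ih' (by lia)
    have hlast := hadj (i + 1) (by lia)
    refine ⟨hreach.trans hlast.reachable, ?_⟩
    rcases hΓ.dist_eq_dist_add_one_of_adj_of_reachable (P 0) hlast hreach with hcloser | hfarther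
    · exact absurd (eq_of_adj_of_dist_add_one_eq hΓ (hadj i (by lia)).symm hlast hreach
        (by lia) hcloser.symm) (hne i hi)
    · rw [hfarther, hdist']

theorem iso_getVert_eq_of_isPath (hΓ : Γ.IsAcyclic) {p : Γ.Walk u v} (hp : p.IsPath)
    (φ : Γ ≃g Γ) (hu : φ u = u) (hv : φ v = v) (i : ℕ) : φ (p.getVert i) = p.getVert i := by
  have hmap : ((p.map φ.toHom).copy hu hv).IsPath := by
    rw [Walk.isPath_copy]
    exact hp.map φ.injective
  have heq := congrArg Subtype.val ((hΓ.subsingleton_path u v).elim ⟨_, hmap⟩ ⟨p, hp⟩)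
  have hvert := congrArg (fun q : Γ.Walk u v => q.getVert i) heq
  simpa using hvert

section Median

variable [Fintype V]

/-- The sum of the distances from `v`. Its minimizers on a component are the medians of that
component; vertices outside the component contribute the junk distance `0`. -/
noncomputable def distSum (Γ : SimpleGraph V) (v : V) : ℕ :=
  ∑ x, Γ.dist x v

theorem distSum_iso_apply (φ : Γ ≃g Γ) (v : V) : distSum Γ (φ v) = distSum Γ v := by
  rw [distSum, ← Equiv.sum_comp φ.toEquiv]
  exact Finset.sum_congr rfl fun x _ => dist_iso_apply φ x v

theorem two_mul_distSum_lt (hΓ : Γ.IsAcyclic) (hu : Γ.Adj v u) (hw : Γ.Adj v w) (hne : u ≠ w) :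
    2 * distSum Γ v < distSum Γ u + distSum Γ w := by
  simp only [distSum, Finset.mul_sum, ← Finset.sum_add_distrib]
  refine Finset.sum_lt_sum (fun x _ => ?_) ⟨v, Finset.mem_univ v, ?_⟩
  · by_cases hx : Γ.Reachable x v
    · by_contra hlt
      have hxu := hΓ.dist_eq_dist_add_one_of_adj_of_reachable x hu hx
      have hxw := hΓ.dist_eq_dist_add_one_of_adj_of_reachable x hw hx
      exact hne (eq_of_adj_of_dist_add_one_eq hΓ hu hw hx (by lia) (by lia))
    · simp [dist_eq_zero_of_not_reachable hx]
  · simp [dist_eq_one_iff_adj.2 hu, dist_eq_one_iff_adj.2 hw]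

theorem eq_or_adj_of_distSum_min (hΓ : Γ.IsAcyclic) (huv : Γ.Reachable u v)
    (hu : ∀ y, Γ.Reachable u y → distSum Γ u ≤ distSum Γ y)
    (hv : distSum Γ v = distSum Γ u) : v = u ∨ Γ.Adj u v := by
  obtain ⟨p, hpath, hp⟩ := huv.exists_path_of_dist
  by_contra! h
  have hlen : 1 < p.length := hp ▸ huv.one_lt_dist_of_ne_of_not_adj h.1.symm h.2
  -- A strictly convex function attains no interior maximum.
  obtain ⟨i, hi, hmax⟩ := Finset.exists_max_image (Finset.Ioo 0 p.length)
    (fun i => distSum Γ (p.getVert i)) ⟨1, Finset.mem_Ioo.2 ⟨one_pos, hlen⟩⟩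
  have hle : ∀ j ≤ p.length, distSum Γ (p.getVert j) ≤ distSum Γ (p.getVert i) := by
    have hui := hu _ (p.take i).reachable
    intro j hj
    rcases Nat.eq_zero_or_pos j with rfl | hj0
    · simpa using hui
    rcases hj.eq_or_lt with rfl | hjlt
    · simpa [hv] using hui
    · exact hmax j (Finset.mem_Ioo.2 ⟨hj0, hjlt⟩)
  obtain ⟨k, rfl⟩ : ∃ k, i = k + 1 := ⟨i - 1, by grind⟩
  have hk : k + 1 < p.length := (Finset.mem_Ioo.1 hi).2
  have hne : p.getVert k ≠ p.getVert (k + 1 + 1) := fun heq => by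
    have := hpath.getVert_injOn (by grind) (by grind) heq
    lia
  have hconvex := two_mul_distSum_lt hΓ (p.adj_getVert_succ (by lia : k < p.length)).symm
    (p.adj_getVert_succ hk) hne
  have := hle k (by lia)
  have := hle (k + 1 + 1) hk
  lia

end Median

theorem exists_reachable_forall_iso_eq_or_adj [Finite V] (hΓ : Γ.IsAcyclic) (a : V) :
    ∃ c, Γ.Reachable a c ∧
      ∀ φ : Γ ≃g Γ, Γ.Reachable a (φ a) → φ c = c ∨ Γ.Adj c (φ c) := by
  have := Fintype.ofFinite V
  obtain ⟨c, hac, hmin⟩ := Set.exists_min_image {c | Γ.Reachable a c} (distSum Γ)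
    (Set.toFinite _) ⟨a, Reachable.refl a⟩
  refine ⟨c, hac, fun φ hφ => ?_⟩
  have hφc : Γ.Reachable a (φ c) := hφ.trans (φ.reachable_iff.2 hac)
  exact eq_or_adj_of_distSum_min hΓ (hac.symm.trans hφc) (fun y hy => hmin y (hac.trans hy))
    (distSum_iso_apply φ c)

end Forest

section Chordal

variable {V V' : Type*} {Γ : SimpleGraph V} {Γ' : SimpleGraph V'} {u v : V}

theorem cycleGraph_succ_adj_iff {m : ℕ} (hm : 1 ≤ m) (i j : Fin (m + 1)) :
    (cycleGraph (m + 1)).Adj i j ↔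
      (i : ℕ) + 1 = j ∨ (j : ℕ) + 1 = i ∨ (i : ℕ) = 0 ∧ (j : ℕ) = m ∨
        (i : ℕ) = m ∧ (j : ℕ) = 0 := by
  rw [cycleGraph_adj']
  rcases lt_trichotomy i j with hij | rfl | hij
  · rw [Fin.sub_val_of_le hij.le, Fin.coe_sub_iff_lt.2 hij]
    lia
  · rw [sub_self, Fin.val_zero]
    lia
  · rw [Fin.sub_val_of_le hij.le, Fin.coe_sub_iff_lt.2 hij]
    lia

theorem two_le_dist_deleteEdges (huv : Γ.Adj u v)
    (hreach : (Γ.deleteEdges {s(u, v)}).Reachable u v) :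
    2 ≤ (Γ.deleteEdges {s(u, v)}).dist u v :=
  hreach.one_lt_dist_of_ne_of_not_adj huv.ne (by simp)

theorem exists_cycleGraph_embedding_of_reachable_deleteEdges (huv : Γ.Adj u v)
    (hreach : (Γ.deleteEdges {s(u, v)}).Reachable u v) :
    ∃ n ≥ 3, Nonempty (cycleGraph n ↪g Γ) := by
  obtain ⟨p, hpath, hp⟩ := hreach.exists_path_of_dist
  have hlen : 2 ≤ p.length := hp ▸ two_le_dist_deleteEdges huv hreach
  have hinj {i j : ℕ} (hi : i ≤ p.length) (hj : j ≤ p.length)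
      (hij : p.getVert i = p.getVert j) : i = j := hpath.getVert_injOn hi hj hij
  have hfirst {i : ℕ} (hi : i ≤ p.length) : p.getVert i = u ↔ i = 0 :=
    ⟨fun h => hinj hi zero_le (h.trans p.getVert_zero.symm), by rintro rfl; simp⟩
  have hlast {i : ℕ} (hi : i ≤ p.length) : p.getVert i = v ↔ i = p.length :=
    ⟨fun h => hinj hi le_rfl (h.trans p.getVert_length.symm), by rintro rfl; simp⟩
  have hadj {i j : ℕ} (hi : i ≤ p.length) (hj : j ≤ p.length) :
      Γ.Adj (p.getVert i) (p.getVert j) ↔ i + 1 = j ∨ j + 1 = i ∨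
        i = 0 ∧ j = p.length ∨ i = p.length ∧ j = 0 := by
    have hgeodesic := adj_getVert_iff_of_length_eq_dist hp hi hj
    rw [deleteEdges_adj, Set.mem_singleton_iff, Sym2.eq_iff, hfirst hi, hfirst hj, hlast hi,
      hlast hj] at hgeodesic
    have hclosing : i = 0 ∧ j = p.length ∨ i = p.length ∧ j = 0 →
        Γ.Adj (p.getVert i) (p.getVert j) := by
      rintro (⟨rfl, rfl⟩ | ⟨rfl, rfl⟩)
      · simpa using huv
      · simpa using huv.symm
    tauto
  refine ⟨p.length + 1, by lia, ⟨⟨fun i => p.getVert i, fun i j hij => ?_⟩, ?_⟩⟩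
  · exact Fin.ext (hinj i.is_le j.is_le hij)
  · intro i j
    exact (hadj i.is_le j.is_le).trans (cycleGraph_succ_adj_iff (by lia) i j).symm

theorem exists_cycleGraph_embedding_of_not_isAcyclic (hΓ : ¬Γ.IsAcyclic) :
    ∃ n ≥ 3, Nonempty (cycleGraph n ↪g Γ) := by
  simp only [isAcyclic_iff_forall_adj_isBridge, isBridge_iff, not_forall, not_not] at hΓ
  obtain ⟨u, v, huv, hreach⟩ := hΓ
  exact exists_cycleGraph_embedding_of_reachable_deleteEdges huv hreach

theorem isAcyclic_of_isChordal_of_cliqueFree_three (hΓ : IsChordal Γ) (hfree : Γ.CliqueFree 3) :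
    Γ.IsAcyclic := by
  by_contra hcyclic
  obtain ⟨n, hn, ⟨e⟩⟩ := exists_cycleGraph_embedding_of_not_isAcyclic hcyclic
  rcases hn.eq_or_lt with rfl | hn
  · rw [cycleGraph_three_eq_top] at e
    exact e.isContained.not_cliqueFree hfree
  · exact (hΓ n hn).false e

theorem isChordal_of_embedding (e : Γ ↪g Γ') (hΓ' : IsChordal Γ') : IsChordal Γ :=
  fun n hn => ⟨fun c => (hΓ' n hn).false (e.comp c)⟩

theorem adj_or_adj_of_isChordal (hΓ : IsChordal Γ) {a b c d : V} (hab : Γ.Adj a b)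
    (hbc : Γ.Adj b c) (hcd : Γ.Adj c d) (hda : Γ.Adj d a) (hac : a ≠ c) (hbd : b ≠ d) :
    Γ.Adj a c ∨ Γ.Adj b d := by
  by_contra! ⟨hnac, hnbd⟩
  refine (hΓ 4 le_rfl).false ⟨⟨![a, b, c, d], ?_⟩, fun {i j} => ?_⟩
  · have := hab.ne
    have := hbc.ne
    have := hcd.ne
    have := hda.ne
    intro i j
    fin_cases i <;> fin_cases j <;> simp_all [eq_comm]
  · rw [cycleGraph_succ_adj_iff (by norm_num)]
    change Γ.Adj (![a, b, c, d] i) (![a, b, c, d] j) ↔ _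
    fin_cases i <;> fin_cases j <;> simp_all [Γ.adj_comm]

end Chordal

section Subdivision

variable {V : Type*} {Γ : SimpleGraph V} {u v : V}

/-- The barycentric subdivision of a graph: each edge of `Γ` becomes a new vertex, adjacent to
the two endpoints of that edge. -/
def subdivision (Γ : SimpleGraph V) : SimpleGraph (V ⊕ Γ.edgeSet) where
  Adj
    | .inl v, .inr e => v ∈ e.1
    | .inr e, .inl v => v ∈ e.1
    | _, _ => False
  symm := ⟨by rintro (_ | _) (_ | _) h <;> exact h⟩
  loopless := ⟨by rintro (_ | _) h <;> exact h⟩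

theorem cliqueFree_three_subdivision : (subdivision Γ).CliqueFree 3 := by
  have coloring : (subdivision Γ).Coloring Bool :=
    Coloring.mk Sum.isLeft (by rintro (_ | _) (_ | _) h <;> simp_all [subdivision])
  exact coloring.colorable.cliqueFree (by simp)

theorem reachable_subdivision_deleteEdges {e : Γ.edgeSet}
    (hreach : (Γ.deleteEdges {e.1}).Reachable u v) (w : V) :
    ((subdivision Γ).deleteEdges {s(.inl w, .inr e)}).Reachable (.inl u) (.inl v) := by
  obtain ⟨p⟩ := hreach
  induction p with
  | nil => rfl
  | @cons a b _ hab _ ih =>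
    rw [deleteEdges_adj, Set.mem_singleton_iff] at hab
    refine Reachable.trans ?_ ih
    let ab : Γ.edgeSet := ⟨s(a, b), hab.1⟩
    have hne : ab ≠ e := fun h => hab.2 (congrArg Subtype.val h)
    trans .inr ab <;> refine Adj.reachable ?_ <;> simp [deleteEdges_adj, subdivision, ab, hne]

theorem isAcyclic_of_isAcyclic_subdivision (hΓ : (subdivision Γ).IsAcyclic) : Γ.IsAcyclic := by
  rw [isAcyclic_iff_forall_adj_isBridge] at hΓ ⊢
  intro u v huv
  let e : Γ.edgeSet := ⟨s(u, v), huv⟩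
  have hue : (subdivision Γ).Adj (.inl u) (.inr e) := Sym2.mem_mk_left u v
  have hve : ((subdivision Γ).deleteEdges {s(.inl u, .inr e)}).Adj (.inl v) (.inr e) := by
    simp [deleteEdges_adj, subdivision, e, huv.ne']
  refine isBridge_iff.2 fun hreach => isBridge_iff.1 (hΓ hue) ?_
  exact (reachable_subdivision_deleteEdges (e := e) hreach u).trans hve.reachable

end Subdivision

section CyclicSubgroups

variable {G : Type*} [Group G]

theorem subgroup_le_of_card_dvd_card [IsCyclic G] [Finite G] {H K : Subgroup G}
    (hdvd : Nat.card H ∣ Nat.card K) : H ≤ K := by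
  let := IsCyclic.commGroup (α := G)
  let ker : Subgroup G := (powMonoidHom (Nat.card K)).ker
  have le_ker {L : Subgroup G} (hL : Nat.card L ∣ Nat.card K) : L ≤ ker := fun x hx =>
    orderOf_dvd_iff_pow_eq_one.1 ((L.orderOf_dvd_natCard hx).trans hL)
  have hker : Nat.card ker = Nat.card K := by
    rw [IsCyclic.card_powMonoidHom_ker, Nat.gcd_eq_right K.card_subgroup_dvd_card]
  exact (le_ker hdvd).trans (Subgroup.eq_of_le_of_card_ge (le_ker dvd_rfl) hker.le).ge

theorem le_of_card_dvd_card_of_le_isCyclic [Finite G] {H K C : Subgroup G} [IsCyclic C]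
    (hH : H ≤ C) (hK : K ≤ C) (hdvd : Nat.card H ∣ Nat.card K) : H ≤ K := by
  have hle : H.subgroupOf C ≤ K.subgroupOf C := by
    apply subgroup_le_of_card_dvd_card
    rwa [Nat.card_congr (Subgroup.subgroupOfEquivOfLe hH).toEquiv,
      Nat.card_congr (Subgroup.subgroupOfEquivOfLe hK).toEquiv]
  exact fun x hx => hle (x := ⟨x, hH hx⟩) hx

theorem zpowers_mul_eq_sup {x y : G} (hxy : Commute x y)
    (hcop : (orderOf x).Coprime (orderOf y)) :
    Subgroup.zpowers (x * y) = Subgroup.zpowers x ⊔ Subgroup.zpowers y := by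
  have left_le {x y : G} (hxy : Commute x y) (hcop : (orderOf x).Coprime (orderOf y)) :
      Subgroup.zpowers x ≤ Subgroup.zpowers (x * y) := by
    obtain ⟨m, hm⟩ := exists_pow_eq_self_of_coprime hcop.symm
    have hpow : (x * y) ^ orderOf y = x ^ orderOf y := by
      rw [hxy.mul_pow, pow_orderOf_eq_one, mul_one]
    have hmem : ((x * y) ^ orderOf y) ^ m ∈ Subgroup.zpowers (x * y) :=
      pow_mem (pow_mem (Subgroup.mem_zpowers (x * y)) _) m
    rw [hpow, hm] at hmem
    exact Subgroup.zpowers_le.2 hmem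
  refine le_antisymm ?_ (sup_le (left_le hxy hcop) ?_)
  · rw [Subgroup.zpowers_le]
    exact Subgroup.mul_mem_sup (Subgroup.mem_zpowers x) (Subgroup.mem_zpowers y)
  · rw [hxy.eq]
    exact left_le hxy.symm hcop.symm

theorem exists_zpowers_eq_sup_of_coprime_card {H K : Subgroup G} [IsCyclic H] [IsCyclic K]
    (hcomm : H ≤ Subgroup.centralizer K) (hcop : (Nat.card H).Coprime (Nat.card K)) :
    ∃ z, Subgroup.zpowers z = H ⊔ K ∧ orderOf z = Nat.card H * Nat.card K := by
  obtain ⟨x, rfl⟩ := H.isCyclic_iff_exists_zpowers_eq_top.1 ‹_›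
  obtain ⟨y, rfl⟩ := K.isCyclic_iff_exists_zpowers_eq_top.1 ‹_›
  simp only [Nat.card_zpowers] at hcop ⊢
  have hxy : Commute x y :=
    (Subgroup.mem_centralizer_iff.1 (hcomm (Subgroup.mem_zpowers x)) y
      (Subgroup.mem_zpowers y)).symm
  exact ⟨x * y, zpowers_mul_eq_sup hxy hcop, hxy.orderOf_mul_eq_mul_orderOf_of_coprime hcop⟩

end CyclicSubgroups

section Normalizers

open scoped commutatorElement

variable {G : Type*} [Group G] {H K A : Subgroup G}

theorem le_or_disjoint_of_prime_card (hH : (Nat.card H).Prime) (K : Subgroup G) :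
    H ≤ K ∨ Disjoint H K := by
  have := Fact.mk hH
  rw [disjoint_comm, ← Subgroup.subgroupOf_eq_bot, ← Subgroup.subgroupOf_eq_top, or_comm]
  exact Subgroup.eq_bot_or_eq_top_of_prime_card _

theorem eq_of_le_of_prime_card (hH : (Nat.card H).Prime) (hK : (Nat.card K).Prime) (hle : H ≤ K) :
    H = K := by
  rcases le_or_disjoint_of_prime_card hK H with hKH | hdisj
  · exact le_antisymm hle hKH
  · rw [hdisj.symm.eq_bot_of_le hle, Subgroup.card_bot] at hH
    exact absurd hH Nat.not_prime_one

theorem le_centralizer_of_le_normalizer_of_disjoint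
    (hH : H ≤ Subgroup.normalizer (K : Set G)) (hK : K ≤ Subgroup.normalizer (H : Set G))
    (hdisj : Disjoint H K) : H ≤ Subgroup.centralizer K := by
  rw [← Subgroup.commutator_eq_bot_iff_le_centralizer, ← le_bot_iff]
  exact hdisj (Subgroup.le_normalizer_iff_commutator_le_left.1 hK)
    (Subgroup.le_normalizer_iff_commutator_le_right.1 hH)

theorem normalizerMonoidHom_eq_one_iff (x : Subgroup.normalizer (A : Set G)) :
    A.normalizerMonoidHom x = 1 ↔ (x : G) ∈ Subgroup.centralizer (A : Set G) := by
  rw [← MonoidHom.mem_ker, Subgroup.normalizerMonoidHom_ker, Subgroup.mem_subgroupOf]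

theorem commutator_le_centralizer_of_isMulCommutative_mulAut [IsMulCommutative (MulAut A)]
    (hH : H ≤ Subgroup.normalizer (A : Set G)) (hK : K ≤ Subgroup.normalizer (A : Set G)) :
    ⁅H, K⁆ ≤ Subgroup.centralizer A := by
  rw [Subgroup.commutator_le]
  intro x hx y hy
  let x' : Subgroup.normalizer (A : Set G) := ⟨x, hH hx⟩
  let y' : Subgroup.normalizer (A : Set G) := ⟨y, hK hy⟩
  refine (normalizerMonoidHom_eq_one_iff ⁅x', y'⁆).1 ?_
  rw [map_commutatorElement, commutatorElement_eq_one_iff_mul_comm]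
  exact IsMulCommutative.is_comm.comm _ _

theorem le_centralizer_of_not_le_centralizer [IsMulCommutative (MulAut A)]
    (hcard : (Nat.card H).Prime) (hHA : H ≤ Subgroup.normalizer (A : Set G))
    (hKA : K ≤ Subgroup.normalizer (A : Set G)) (hKH : K ≤ Subgroup.normalizer (H : Set G))
    (hnot : ¬H ≤ Subgroup.centralizer A) : H ≤ Subgroup.centralizer K := by
  rw [← Subgroup.commutator_eq_bot_iff_le_centralizer, ← le_bot_iff]
  exact (le_or_disjoint_of_prime_card hcard _).resolve_left hnot
    (Subgroup.le_normalizer_iff_commutator_le_left.1 hKH)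
    (commutator_le_centralizer_of_isMulCommutative_mulAut hHA hKA)

theorem le_centralizer_of_coprime_card_mulAut
    (hH : H ≤ Subgroup.normalizer (A : Set G))
    (hcop : (Nat.card H).Coprime (Nat.card (MulAut A))) : H ≤ Subgroup.centralizer A := by
  intro x hx
  let x' : Subgroup.normalizer (A : Set G) := ⟨x, hH hx⟩
  have hdvd : orderOf (A.normalizerMonoidHom x') ∣ Nat.card H :=
    (orderOf_map_dvd _ x').trans (Subgroup.orderOf_mk x (hH hx) ▸ H.orderOf_dvd_natCard hx)
  rw [← normalizerMonoidHom_eq_one_iff x', ← orderOf_eq_one_iff]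
  exact Nat.eq_one_of_dvd_coprimes hcop hdvd (orderOf_dvd_natCard _)

theorem exists_prime_card_le_sup_inf_centralizer [Finite G] [IsCyclic (MulAut A)] {r : ℕ}
    (hr : r.Prime) (hHcard : Nat.card H = r) (hKcard : Nat.card K = r) (hne : H ≠ K)
    (hcomm : H ≤ Subgroup.centralizer K)
    (hH : H ≤ Subgroup.normalizer (A : Set G)) (hK : K ≤ Subgroup.normalizer (A : Set G)) :
    ∃ D : Subgroup G, Nat.card D = r ∧ D ≤ H ⊔ K ∧ D ≤ Subgroup.centralizer A := by
  have := Fact.mk hr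
  let f : (H ⊔ K : Subgroup G) →* MulAut A :=
    A.normalizerMonoidHom.comp (Subgroup.inclusion (sup_le hH hK))
  have hker : f.ker ≠ ⊥ := by
    intro hbot
    have : IsCyclic (H ⊔ K : Subgroup G) :=
      isCyclic_of_injective f ((MonoidHom.ker_eq_bot_iff f).1 hbot)
    refine hne (eq_of_le_of_prime_card (hHcard ▸ hr) (hKcard ▸ hr) ?_)
    exact le_of_card_dvd_card_of_le_isCyclic le_sup_left le_sup_right (by rw [hHcard, hKcard])
  have hpgroup : IsPGroup r (H ⊔ K : Subgroup G) :=
    IsPGroup.to_sup_of_normal_right' (IsPGroup.of_card (n := 1) (by rw [hHcard, pow_one]))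
      (IsPGroup.of_card (n := 1) (by rw [hKcard, pow_one]))
      (hcomm.trans (Subgroup.centralizer_le_normalizer _))
  have hdvd : r ∣ Nat.card f.ker :=
    (hpgroup.to_subgroup f.ker).card_eq_or_dvd.resolve_left (mt Subgroup.card_eq_one.1 hker)
  obtain ⟨x, hx⟩ := exists_prime_orderOf_dvd_card' r hdvd
  refine ⟨Subgroup.zpowers (x : G), ?_, ?_, ?_⟩
  · rw [Nat.card_zpowers, Subgroup.orderOf_coe, Subgroup.orderOf_coe, hx]
  · exact Subgroup.zpowers_le.2 x.1.2
  · exact Subgroup.zpowers_le.2 ((normalizerMonoidHom_eq_one_iff _).1 x.2)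

end Normalizers

section PrimeCommutingGraph

variable {G G' : Type*} [Group G] [Group G']

theorem powerGraph_adj {x y : G} :
    (powerGraph G).Adj x y ↔
      x ≠ y ∧ (x ∈ Subgroup.zpowers y ∨ y ∈ Subgroup.zpowers x) :=
  SimpleGraph.fromRel_adj _ _ _

theorem nonempty_embedding_powerGraph {V : Type*} {Γ : SimpleGraph V} (C : V → Subgroup G)
    [∀ v, IsCyclic (C v)] (hinj : Function.Injective C)
    (hadj : ∀ u v, u ≠ v → (Γ.Adj u v ↔ C u ≤ C v ∨ C v ≤ C u)) :
    Nonempty (Γ ↪g powerGraph G) := by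
  choose gen hgen using fun v => (C v).isCyclic_iff_exists_zpowers_eq_top.1 inferInstance
  have hgen_inj : Function.Injective gen := fun u v h => hinj (by rw [← hgen u, h, hgen v])
  refine ⟨⟨gen, hgen_inj⟩, fun {u v} => ?_⟩
  change (powerGraph G).Adj (gen u) (gen v) ↔ Γ.Adj u v
  rw [powerGraph_adj, hgen_inj.ne_iff, ← Subgroup.zpowers_le, ← Subgroup.zpowers_le, hgen, hgen]
  exact ⟨fun ⟨hne, hle⟩ => (hadj u v hne).2 hle, fun h => ⟨h.ne, (hadj u v h.ne).1 h⟩⟩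

/-- The subgroups of prime order of `G`, the vertices of `primeCommutingGraph G`. -/
abbrev PrimeOrderSubgroup (G : Type*) [Group G] : Type _ :=
  {H : Subgroup G // (Nat.card H).Prime}

/-- The graph on the subgroups of prime order in which two subgroups are adjacent when they
commute elementwise and their orders are different primes, that is, when they generate a cyclic
subgroup whose order is a product of two distinct primes. -/
def primeCommutingGraph (G : Type*) [Group G] : SimpleGraph (PrimeOrderSubgroup G) where
  Adj H K := Nat.card H.1 ≠ Nat.card K.1 ∧ H.1 ≤ Subgroup.centralizer K.1
  symm := ⟨fun _ _ h => ⟨h.1.symm, Subgroup.le_centralizer_iff.1 h.2⟩⟩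
  loopless := ⟨fun _ h => h.1 rfl⟩

instance isCyclic_primeOrderSubgroup (H : PrimeOrderSubgroup G) : IsCyclic H.1 :=
  have := Fact.mk H.2
  isCyclic_of_prime_card rfl

theorem exists_zpowers_eq_sup_of_adj {H K : PrimeOrderSubgroup G}
    (h : (primeCommutingGraph G).Adj H K) :
    ∃ z, Subgroup.zpowers z = H.1 ⊔ K.1 ∧ orderOf z = Nat.card H.1 * Nat.card K.1 :=
  exists_zpowers_eq_sup_of_coprime_card h.2 ((Nat.coprime_primes H.2 K.2).2 h.1)

/-- The join of the two endpoints of a pair of subgroups of prime order. -/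
def edgeJoin : Sym2 (PrimeOrderSubgroup G) → Subgroup G :=
  Sym2.lift ⟨fun H K => H.1 ⊔ K.1, fun _ _ => sup_comm _ _⟩

theorem le_edgeJoin_of_mem {H : PrimeOrderSubgroup G} {e : Sym2 (PrimeOrderSubgroup G)}
    (h : H ∈ e) : H.1 ≤ edgeJoin e := by
  obtain ⟨K, rfl⟩ := h
  exact le_sup_left

theorem mem_of_le_edgeJoin [Finite G] {H : PrimeOrderSubgroup G}
    {e : Sym2 (PrimeOrderSubgroup G)} (he : e ∈ (primeCommutingGraph G).edgeSet)
    (hle : H.1 ≤ edgeJoin e) : H ∈ e := by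
  induction e with | h K L => ?_
  obtain ⟨z, hz, horder⟩ := exists_zpowers_eq_sup_of_adj he
  have : IsCyclic (K.1 ⊔ L.1 : Subgroup G) := hz ▸ inferInstance
  have eq_of_dvd {M : PrimeOrderSubgroup G} (hM : M.1 ≤ K.1 ⊔ L.1)
      (hdvd : Nat.card H.1 ∣ Nat.card M.1) : H = M :=
    Subtype.ext (eq_of_le_of_prime_card H.2 M.2
      (le_of_card_dvd_card_of_le_isCyclic (C := K.1 ⊔ L.1) hle hM hdvd))
  have hdvd : Nat.card H.1 ∣ Nat.card K.1 * Nat.card L.1 := by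
    rw [← horder, ← Nat.card_zpowers, hz]
    exact Subgroup.card_dvd_of_le hle
  exact Sym2.mem_iff.2 ((H.2.dvd_mul.1 hdvd).imp (eq_of_dvd le_sup_left) (eq_of_dvd le_sup_right))

/-- The cyclic subgroup of `G` attached to a vertex of the subdivided `primeCommutingGraph G`. -/
def subdivisionSubgroup :
    PrimeOrderSubgroup G ⊕ (primeCommutingGraph G).edgeSet → Subgroup G :=
  Sum.elim Subtype.val fun e => edgeJoin e.1

instance isCyclic_subdivisionSubgroup
    (x : PrimeOrderSubgroup G ⊕ (primeCommutingGraph G).edgeSet) :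
    IsCyclic (subdivisionSubgroup x) := by
  rcases x with H | ⟨e, he⟩
  · exact isCyclic_primeOrderSubgroup H
  · induction e with | h H K => ?_
    obtain ⟨z, hz, -⟩ := exists_zpowers_eq_sup_of_adj he
    change IsCyclic (H.1 ⊔ K.1 : Subgroup G)
    exact hz ▸ inferInstance

theorem subdivisionSubgroup_le_iff [Finite G]
    {x y : PrimeOrderSubgroup G ⊕ (primeCommutingGraph G).edgeSet} :
    subdivisionSubgroup x ≤ subdivisionSubgroup y ↔
      x = y ∨ x.isLeft ∧ (subdivision (primeCommutingGraph G)).Adj x y := by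
  constructor
  · intro hle
    rcases x with H | ⟨e, he⟩ <;> rcases y with K | f
    · exact .inl (congrArg Sum.inl (Subtype.ext (eq_of_le_of_prime_card H.2 K.2 hle)))
    · exact .inr ⟨rfl, mem_of_le_edgeJoin f.2 hle⟩
    all_goals
      induction e with | h A B => ?_
      have hne : A ≠ B := Adj.ne ((primeCommutingGraph G).mem_edgeSet.1 he)
    · have eq_K {M : PrimeOrderSubgroup G} (hM : M ∈ s(A, B)) : M = K :=
        Subtype.ext (eq_of_le_of_prime_card M.2 K.2 ((le_edgeJoin_of_mem hM).trans hle))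
      exact absurd ((eq_K (Sym2.mem_mk_left A B)).trans (eq_K (Sym2.mem_mk_right A B)).symm) hne
    · have mem_f {M : PrimeOrderSubgroup G} (hM : M ∈ s(A, B)) : M ∈ f.1 :=
        mem_of_le_edgeJoin f.2 ((le_edgeJoin_of_mem hM).trans hle)
      have hf := (Sym2.mem_and_mem_iff hne).1
        ⟨mem_f (Sym2.mem_mk_left A B), mem_f (Sym2.mem_mk_right A B)⟩
      exact .inl (congrArg Sum.inr (Subtype.ext hf.symm))
  · rintro (rfl | ⟨hleft, hadj⟩)
    · rfl
    · rcases x with H | e <;> rcases y with K | f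
      exacts [hadj.elim, le_edgeJoin_of_mem hadj, by simp at hleft, hadj.elim]

theorem nonempty_subdivision_primeCommutingGraph_embedding [Finite G] :
    Nonempty (subdivision (primeCommutingGraph G) ↪g powerGraph G) := by
  refine nonempty_embedding_powerGraph subdivisionSubgroup (fun x y hxy => ?_) fun x y hne => ?_
  · have hle := subdivisionSubgroup_le_iff.1 hxy.le
    have hge := subdivisionSubgroup_le_iff.1 hxy.ge
    rcases x with _ | _ <;> rcases y with _ | _ <;> simp_all [subdivision]
  · rw [subdivisionSubgroup_le_iff, subdivisionSubgroup_le_iff]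
    rcases x with _ | _ <;> rcases y with _ | _ <;> simp_all [subdivision, hne.symm]

theorem isAcyclic_primeCommutingGraph [Finite G] (hG : IsChordal (powerGraph G)) :
    (primeCommutingGraph G).IsAcyclic := by
  obtain ⟨e⟩ := nonempty_subdivision_primeCommutingGraph_embedding (G := G)
  exact isAcyclic_of_isAcyclic_subdivision
    (isAcyclic_of_isChordal_of_cliqueFree_three (isChordal_of_embedding e hG)
      cliqueFree_three_subdivision)

theorem card_mapSubgroup (φ : G ≃* G') (H : Subgroup G) :
    Nat.card (φ.mapSubgroup H) = Nat.card H :=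
  (Nat.card_congr (φ.subgroupMap H).toEquiv).symm

theorem mapSubgroup_le_centralizer_iff (φ : G ≃* G') (H K : Subgroup G) :
    φ.mapSubgroup H ≤ Subgroup.centralizer (φ.mapSubgroup K) ↔ H ≤ Subgroup.centralizer K := by
  rw [← Subgroup.commutator_eq_bot_iff_le_centralizer,
    ← Subgroup.commutator_eq_bot_iff_le_centralizer]
  change ⁅H.map φ.toMonoidHom, K.map φ.toMonoidHom⁆ = ⊥ ↔ _
  rw [← Subgroup.map_commutator]
  exact Subgroup.map_eq_bot_iff_of_injective _ φ.injective

/-- The isomorphism of prime commuting graphs induced by an isomorphism of groups. -/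
def primeCommutingGraphIso (φ : G ≃* G') : primeCommutingGraph G ≃g primeCommutingGraph G' where
  toEquiv := φ.mapSubgroup.toEquiv.subtypeEquiv fun H => by
    rw [RelIso.coe_fn_toEquiv, card_mapSubgroup]
  map_rel_iff' {H K} := by
    change Nat.card (φ.mapSubgroup H.1) ≠ Nat.card (φ.mapSubgroup K.1) ∧
      φ.mapSubgroup H.1 ≤ Subgroup.centralizer (φ.mapSubgroup K.1) ↔ _
    rw [card_mapSubgroup, card_mapSubgroup, mapSubgroup_le_centralizer_iff]
    rfl

theorem primeCommutingGraphIso_conj_apply_eq_iff {g : G} {H : PrimeOrderSubgroup G} :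
    primeCommutingGraphIso (MulAut.conj g) H = H ↔ g ∈ Subgroup.normalizer (H.1 : Set G) := by
  rw [Subgroup.mem_normalizer_iff_map_conj_eq, Subtype.ext_iff]
  rfl

theorem not_adj_primeCommutingGraphIso_apply (φ : G ≃* G) (H : PrimeOrderSubgroup G) :
    ¬(primeCommutingGraph G).Adj H (primeCommutingGraphIso φ H) :=
  fun h => h.1 (card_mapSubgroup φ H.1).symm

end PrimeCommutingGraph

section Radius

variable {G : Type*} [Group G]

theorem exists_reachable_forall_normalizer_le [Finite G]
    (hG : (primeCommutingGraph G).IsAcyclic) (A : PrimeOrderSubgroup G) :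
    ∃ C, (primeCommutingGraph G).Reachable A C ∧
      ∀ H, (primeCommutingGraph G).Reachable C H →
        Subgroup.normalizer (H.1 : Set G) ≤ Subgroup.normalizer (C.1 : Set G) := by
  obtain ⟨C, hAC, hC⟩ := exists_reachable_forall_iso_eq_or_adj hG A
  refine ⟨C, hAC, fun H hCH g hg => ?_⟩
  let φ := primeCommutingGraphIso (MulAut.conj g)
  have hAH := hAC.trans hCH
  have hφH : φ H = H := primeCommutingGraphIso_conj_apply_eq_iff.2 hg
  have hφA : (primeCommutingGraph G).Reachable (φ A) H := hφH ▸ φ.reachable_iff.2 hAH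
  exact primeCommutingGraphIso_conj_apply_eq_iff.1 ((hC φ (hAH.trans hφA.symm)).resolve_right
    (not_adj_primeCommutingGraphIso_apply _ C))

theorem normalizer_getVert_le (hG : (primeCommutingGraph G).IsAcyclic)
    {C H : PrimeOrderSubgroup G}
    (hC : ∀ H, (primeCommutingGraph G).Reachable C H →
      Subgroup.normalizer (H.1 : Set G) ≤ Subgroup.normalizer (C.1 : Set G))
    {p : (primeCommutingGraph G).Walk C H} (hp : p.IsPath) {i j : ℕ} (hij : i ≤ j) :
    Subgroup.normalizer ((p.getVert j).1 : Set G) ≤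
      Subgroup.normalizer ((p.getVert i).1 : Set G) := by
  intro g hg
  have hfix := iso_getVert_eq_of_isPath hG (hp.take j) (primeCommutingGraphIso (MulAut.conj g))
    (primeCommutingGraphIso_conj_apply_eq_iff.2 (hC _ (p.take j).reachable hg))
    (primeCommutingGraphIso_conj_apply_eq_iff.2 hg) i
  rw [Walk.take_getVert, min_eq_right hij] at hfix
  exact primeCommutingGraphIso_conj_apply_eq_iff.1 hfix

theorem eq_or_adj_or_adj_of_normalizer_le {P Q R : PrimeOrderSubgroup G}
    (hQR : (primeCommutingGraph G).Adj Q R)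
    (hRQ : Subgroup.normalizer (R.1 : Set G) ≤ Subgroup.normalizer (Q.1 : Set G))
    (hQP : Q.1 ≤ Subgroup.normalizer (P.1 : Set G)) (hPR : P.1 ≤ Subgroup.centralizer R.1) :
    P = Q ∨ (primeCommutingGraph G).Adj P Q ∨ (primeCommutingGraph G).Adj P R := by
  rcases le_or_disjoint_of_prime_card P.2 Q.1 with hle | hdisj
  · exact .inl (Subtype.ext (eq_of_le_of_prime_card P.2 Q.2 hle))
  · have hPQ : P.1 ≤ Subgroup.centralizer Q.1 :=
      le_centralizer_of_le_normalizer_of_disjoint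
        ((hPR.trans (Subgroup.centralizer_le_normalizer _)).trans hRQ) hQP hdisj
    by_cases hcard : Nat.card P.1 = Nat.card Q.1
    · exact .inr (.inr ⟨hcard ▸ hQR.1, hPR⟩)
    · exact .inr (.inl ⟨hcard, hPQ⟩)

instance isCyclic_mulAut_primeOrderSubgroup [Finite G] (A : PrimeOrderSubgroup G) :
    IsCyclic (MulAut A.1) :=
  have := Fact.mk A.2
  (IsCyclic.mulAutMulEquiv A.1).isCyclic.2 inferInstance

theorem le_centralizer_of_le_normalizer_of_card_eq [Finite G] {H A : PrimeOrderSubgroup G}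
    (hHA : H.1 ≤ Subgroup.normalizer (A.1 : Set G)) (hcard : Nat.card H.1 = Nat.card A.1) :
    H.1 ≤ Subgroup.centralizer A.1 := by
  apply le_centralizer_of_coprime_card_mulAut hHA
  rw [hcard, IsCyclic.card_mulAut, Nat.totient_prime A.2]
  exact (Nat.coprime_self_sub_right A.2.one_le).2 (Nat.coprime_one_right _)

theorem exists_common_neighbor_of_le_normalizer [Finite G] {A B H K : PrimeOrderSubgroup G}
    (hHA : H.1 ≤ Subgroup.normalizer (A.1 : Set G)) (hKA : K.1 ≤ Subgroup.normalizer (A.1 : Set G))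
    (hKH : K.1 ≤ Subgroup.normalizer (H.1 : Set G)) (hnot : ¬H.1 ≤ Subgroup.centralizer A.1)
    (hne : H ≠ K) (hnadj : ¬(primeCommutingGraph G).Adj H K)
    (hHB : (primeCommutingGraph G).Adj H B) (hKB : (primeCommutingGraph G).Adj K B) :
    ∃ D, (primeCommutingGraph G).Adj A D ∧ (primeCommutingGraph G).Adj D B := by
  have hHK : H.1 ≤ Subgroup.centralizer K.1 :=
    le_centralizer_of_not_le_centralizer H.2 hHA hKA hKH hnot
  have hcardK : Nat.card K.1 = Nat.card H.1 := by
    by_contra hcard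
    exact hnadj ⟨Ne.symm hcard, hHK⟩
  have hcardA : Nat.card A.1 ≠ Nat.card H.1 := fun hcard =>
    hnot (le_centralizer_of_le_normalizer_of_card_eq hHA hcard.symm)
  obtain ⟨D, hDcard, hDle, hDA⟩ := exists_prime_card_le_sup_inf_centralizer H.2 rfl hcardK
    (Subtype.coe_injective.ne hne) hHK hHA hKA
  refine ⟨⟨D, hDcard ▸ H.2⟩, ⟨?_, Subgroup.le_centralizer_iff.1 hDA⟩, ⟨?_, ?_⟩⟩
  · exact hcardA.trans_eq hDcard.symm
  · exact hDcard.trans_ne hHB.1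
  · exact hDle.trans (sup_le hHB.2 hKB.2)

theorem dist_le_four_of_forall_normalizer_le [Finite G] (hG : (primeCommutingGraph G).IsAcyclic)
    {C H : PrimeOrderSubgroup G}
    (hC : ∀ H, (primeCommutingGraph G).Reachable C H →
      Subgroup.normalizer (H.1 : Set G) ≤ Subgroup.normalizer (C.1 : Set G))
    (hCH : (primeCommutingGraph G).Reachable C H) : (primeCommutingGraph G).dist C H ≤ 4 := by
  by_contra! hfar
  obtain ⟨p, hpath, hp⟩ := hCH.exists_path_of_dist
  let P := p.getVert
  have hadj {i j : ℕ} (hi : i ≤ 5) (hj : j ≤ 5) :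
      (primeCommutingGraph G).Adj (P i) (P j) ↔ i + 1 = j ∨ j + 1 = i :=
    adj_getVert_iff_of_length_eq_dist hp (by lia) (by lia)
  have hne {i j : ℕ} (hi : i ≤ 5) (hj : j ≤ 5) (hij : i ≠ j) : P i ≠ P j :=
    fun h => hij (hpath.getVert_injOn (by grind) (by grind) h)
  have hnormalizer {i j : ℕ} (hij : i ≤ j) := normalizer_getVert_le hG hC hpath hij
  have hle {i j : ℕ} (hij : i ≤ j) : (P j).1 ≤ Subgroup.normalizer ((P i).1 : Set G) :=
    Subgroup.le_normalizer.trans (hnormalizer hij)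
  have h23 : (primeCommutingGraph G).Adj (P 2) (P 3) := by simp [hadj]
  have h34 : (primeCommutingGraph G).Adj (P 3) (P 4) := by simp [hadj]
  have h54 : (primeCommutingGraph G).Adj (P 5) (P 4) := by simp [hadj]
  have h02 : ¬(primeCommutingGraph G).Adj (P 0) (P 2) := by simp [hadj]
  have h03 : ¬(primeCommutingGraph G).Adj (P 0) (P 3) := by simp [hadj]
  have h35 : ¬(primeCommutingGraph G).Adj (P 3) (P 5) := by simp [hadj]
  have hnot : ¬(P 3).1 ≤ Subgroup.centralizer (P 0).1 := fun h30 => by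
    have htri := eq_or_adj_or_adj_of_normalizer_le h23 (hnormalizer (Nat.le_succ 2))
      (hle (Nat.zero_le 2)) (Subgroup.le_centralizer_iff.1 h30)
    exact htri.elim (hne (by norm_num) (by norm_num) (by norm_num)) (Or.elim · h02 h03)
  obtain ⟨D, h0D, hD4⟩ := exists_common_neighbor_of_le_normalizer (hle (Nat.zero_le 3))
    (hle (Nat.zero_le 5)) (hle (by norm_num)) hnot (hne (by norm_num) le_rfl (by norm_num))
    h35 h34 h54
  have hdist : (primeCommutingGraph G).dist (P 0) (P 4) = 4 := by
    rw [show P 0 = C from p.getVert_zero]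
    exact dist_getVert_of_length_eq_dist hp (by lia)
  have := dist_le (.cons h0D (.cons hD4 .nil))
  simp [hdist] at this

theorem dist_le_eight_of_reachable [Finite G] (hG : (primeCommutingGraph G).IsAcyclic)
    {H K : PrimeOrderSubgroup G} (hHK : (primeCommutingGraph G).Reachable H K) :
    (primeCommutingGraph G).dist H K ≤ 8 := by
  obtain ⟨C, hHC, hC⟩ := exists_reachable_forall_normalizer_le hG H
  have hCH := dist_le_four_of_forall_normalizer_le hG hC hHC.symm
  have hCK := dist_le_four_of_forall_normalizer_le hG hC (hHC.symm.trans hHK)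
  have htri := hHC.dist_triangle_left K
  rw [dist_comm] at hCH
  lia

end Radius

section Fences

variable {G : Type*} [Group G]

/-- The elements `b 0, t 0, b 1, t 1, …, b (n - 1), t (n - 1)` form a fence in the preorder
`x ∈ ⟨y⟩`: each bottom `b k` lies below its neighbours `t (k - 1)` and `t k`, while the bottoms
are pairwise incomparable, and so are the tops. Values of `b` and `t` at indices `≥ n` are
irrelevant. -/
structure IsFence (n : ℕ) (b t : ℕ → G) : Prop where
  left_mem : ∀ k < n, b k ∈ Subgroup.zpowers (t k)
  right_mem : ∀ k, k + 1 < n → b (k + 1) ∈ Subgroup.zpowers (t k)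
  bottom_notMem : ∀ k < n, ∀ l < n, k ≠ l → b k ∉ Subgroup.zpowers (b l)
  top_notMem : ∀ k < n, ∀ l < n, k ≠ l → t k ∉ Subgroup.zpowers (t l)

theorem mem_zpowers_or_mem_zpowers_of_isChordal (hG : IsChordal (powerGraph G)) {t t' x y : G}
    (ht : t ∉ Subgroup.zpowers t') (ht' : t' ∉ Subgroup.zpowers t)
    (hx : x ∈ Subgroup.zpowers t ⊓ Subgroup.zpowers t')
    (hy : y ∈ Subgroup.zpowers t ⊓ Subgroup.zpowers t') :
    x ∈ Subgroup.zpowers y ∨ y ∈ Subgroup.zpowers x := by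
  have adj_left {z : G} (hz : z ∈ Subgroup.zpowers t ⊓ Subgroup.zpowers t') :
      (powerGraph G).Adj t z := powerGraph_adj.2 ⟨fun h => ht (h ▸ hz.2), .inr hz.1⟩
  have adj_right {z : G} (hz : z ∈ Subgroup.zpowers t ⊓ Subgroup.zpowers t') :
      (powerGraph G).Adj t' z := powerGraph_adj.2 ⟨fun h => ht' (h ▸ hz.1), .inr hz.2⟩
  have htt' : t ≠ t' := fun h => ht (h ▸ Subgroup.mem_zpowers t)
  rcases eq_or_ne x y with rfl | hxy
  · exact .inl (Subgroup.mem_zpowers x)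
  · rcases adj_or_adj_of_isChordal hG (adj_left hx) (adj_right hx).symm (adj_right hy)
      (adj_left hy).symm htt' hxy with h | h
    · exact ((powerGraph_adj.1 h).2.elim ht ht').elim
    · exact (powerGraph_adj.1 h).2

theorem eq_of_le_inf_zpowers (hG : IsChordal (powerGraph G)) {t t' : G}
    (ht : t ∉ Subgroup.zpowers t') (ht' : t' ∉ Subgroup.zpowers t) {P Q : PrimeOrderSubgroup G}
    (hP : P.1 ≤ Subgroup.zpowers t ⊓ Subgroup.zpowers t')
    (hQ : Q.1 ≤ Subgroup.zpowers t ⊓ Subgroup.zpowers t') : P = Q := by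
  obtain ⟨x, hx⟩ := P.1.isCyclic_iff_exists_zpowers_eq_top.1 inferInstance
  obtain ⟨y, hy⟩ := Q.1.isCyclic_iff_exists_zpowers_eq_top.1 inferInstance
  rw [← hx, Subgroup.zpowers_le] at hP
  rw [← hy, Subgroup.zpowers_le] at hQ
  have hle := mem_zpowers_or_mem_zpowers_of_isChordal hG ht ht' hP hQ
  rw [← Subgroup.zpowers_le, ← Subgroup.zpowers_le, hx, hy] at hle
  exact Subtype.ext (hle.elim (eq_of_le_of_prime_card P.2 Q.2)
    fun h => (eq_of_le_of_prime_card Q.2 P.2 h).symm)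

theorem exists_primeOrderSubgroup_le_zpowers [Finite G] {x : G} {q : ℕ} (hq : q.Prime)
    (hdvd : q ∣ orderOf x) :
    ∃ P : PrimeOrderSubgroup G, Nat.card P.1 = q ∧ P.1 ≤ Subgroup.zpowers x := by
  have hcard : Nat.card (Subgroup.zpowers (x ^ (orderOf x / q))) = q := by
    rw [Nat.card_zpowers, orderOf_pow_orderOf_div (orderOf_pos x).ne' hdvd]
  exact ⟨⟨Subgroup.zpowers (x ^ (orderOf x / q)), hcard.symm ▸ hq⟩, hcard,
    Subgroup.zpowers_le.2 (Subgroup.npow_mem_zpowers x _)⟩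

theorem isPrimePow_orderOf_of_mem_inf_zpowers [Finite G] (hG : IsChordal (powerGraph G))
    {t t' x : G} (ht : t ∉ Subgroup.zpowers t') (ht' : t' ∉ Subgroup.zpowers t)
    (hx : x ∈ Subgroup.zpowers t ⊓ Subgroup.zpowers t') (hx_one : x ≠ 1) :
    IsPrimePow (orderOf x) := by
  have hle := Subgroup.zpowers_le.2 hx
  obtain ⟨p, hp, hpx⟩ := Nat.exists_prime_and_dvd (orderOf_eq_one_iff.not.2 hx_one)
  refine isPrimePow_iff_unique_prime_dvd.2 ⟨p, ⟨hp, hpx⟩, fun q ⟨hq, hqx⟩ => ?_⟩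
  obtain ⟨P, rfl, hP⟩ := exists_primeOrderSubgroup_le_zpowers hp hpx
  obtain ⟨Q, rfl, hQ⟩ := exists_primeOrderSubgroup_le_zpowers hq hqx
  rw [eq_of_le_inf_zpowers hG ht ht' (hP.trans hle) (hQ.trans hle)]

theorem exists_prime_dvd_not_dvd_of_isPrimePow {m n : ℕ} (hn : IsPrimePow n) (hm : m ≠ 0)
    (hmn : ¬m ∣ n) (hnm : ¬n ∣ m) : ∃ q, q.Prime ∧ q ∣ m ∧ ¬q ∣ n := by
  obtain ⟨p, k, hp, -, rfl⟩ := hn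
  by_contra! hall
  have hm_pow := Nat.eq_prime_pow_of_unique_prime_dvd hm fun {q} hq hqm =>
    (Nat.prime_dvd_prime_iff_eq hq hp.nat_prime).1 (hq.dvd_of_dvd_pow (hall q hq hqm))
  rw [hm_pow] at hmn hnm
  rcases le_total k m.primeFactorsList.length with h | h
  · exact hnm (pow_dvd_pow p h)
  · exact hmn (pow_dvd_pow p h)

theorem not_orderOf_dvd_of_mem_zpowers [Finite G] {x y z : G} (hx : x ∈ Subgroup.zpowers z)
    (hy : y ∈ Subgroup.zpowers z) (hxy : x ∉ Subgroup.zpowers y) : ¬orderOf x ∣ orderOf y := by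
  intro hdvd
  rw [← Nat.card_zpowers, ← Nat.card_zpowers] at hdvd
  rw [← Subgroup.zpowers_le] at hx hy hxy
  exact hxy (le_of_card_dvd_card_of_le_isCyclic hx hy hdvd)

namespace IsFence

variable {n k : ℕ} {b t : ℕ → G}

theorem bottom_ne_one (h : IsFence n b t) (hn : 2 ≤ n) (hk : k < n) : b k ≠ 1 := by
  intro hone
  obtain ⟨l, hl, hkl⟩ : ∃ l < n, k ≠ l :=
    if hk0 : k = 0 then ⟨1, by lia, by lia⟩ else ⟨0, by lia, hk0⟩
  exact h.bottom_notMem k hk l hl hkl (hone ▸ one_mem _)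

theorem bottom_mem_inf (h : IsFence n b t) (hk : k + 1 < n) :
    b (k + 1) ∈ Subgroup.zpowers (t k) ⊓ Subgroup.zpowers (t (k + 1)) :=
  ⟨h.right_mem k hk, h.left_mem (k + 1) hk⟩

theorem exists_prime_dvd_not_dvd [Finite G] (h : IsFence n b t) (hG : IsChordal (powerGraph G))
    (hk : k + 1 < n) : ∃ q, q.Prime ∧ q ∣ orderOf (b k) ∧ ¬q ∣ orderOf (b (k + 1)) := by
  have hk' : k < n := by lia
  have hne : k ≠ k + 1 := by lia
  have hpow := isPrimePow_orderOf_of_mem_inf_zpowers hG (h.top_notMem k hk' _ hk hne)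
    (h.top_notMem _ hk k hk' hne.symm) (h.bottom_mem_inf hk) (h.bottom_ne_one (by lia) hk)
  exact exists_prime_dvd_not_dvd_of_isPrimePow hpow (orderOf_pos (b k)).ne'
    (not_orderOf_dvd_of_mem_zpowers (h.left_mem k hk') (h.right_mem k hk)
      (h.bottom_notMem k hk' _ hk hne))
    (not_orderOf_dvd_of_mem_zpowers (h.right_mem k hk) (h.left_mem k hk')
      (h.bottom_notMem _ hk k hk' hne.symm))

theorem exists_primeOrderSubgroup [Finite G] (h : IsFence n b t) (hG : IsChordal (powerGraph G))
    (hn : 2 ≤ n) (hk : k < n) :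
    ∃ P : PrimeOrderSubgroup G, P.1 ≤ Subgroup.zpowers (b k) ∧
      (k + 1 < n → ¬Nat.card P.1 ∣ orderOf (b (k + 1))) := by
  by_cases hk' : k + 1 < n
  · obtain ⟨q, hq, hqk, hqk'⟩ := h.exists_prime_dvd_not_dvd hG hk'
    obtain ⟨P, rfl, hP⟩ := exists_primeOrderSubgroup_le_zpowers hq hqk
    exact ⟨P, hP, fun _ => hqk'⟩
  · obtain ⟨q, hq, hqk⟩ :=
      Nat.exists_prime_and_dvd (orderOf_eq_one_iff.not.2 (h.bottom_ne_one hn hk))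
    obtain ⟨P, -, hP⟩ := exists_primeOrderSubgroup_le_zpowers hq hqk
    exact ⟨P, hP, fun hlt => absurd hlt hk'⟩

theorem exists_nonbacktracking [Finite G] (h : IsFence n b t) (hG : IsChordal (powerGraph G))
    (hn : 2 ≤ n) :
    ∃ P : ℕ → PrimeOrderSubgroup G,
      (∀ k, k + 1 < n → (primeCommutingGraph G).Adj (P k) (P (k + 1))) ∧
        ∀ k, k + 2 < n → P k ≠ P (k + 2) := by
  have : Nonempty (PrimeOrderSubgroup G) :=
    ⟨(h.exists_primeOrderSubgroup hG hn (k := 0) (by lia)).choose⟩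
  choose! P hPb hPcard using fun k (hk : k < n) => h.exists_primeOrderSubgroup hG hn hk
  have hP_left k (hk : k < n) : (P k).1 ≤ Subgroup.zpowers (t k) :=
    (hPb k hk).trans (Subgroup.zpowers_le.2 (h.left_mem k hk))
  have hP_right k (hk : k + 1 < n) : (P (k + 1)).1 ≤ Subgroup.zpowers (t k) :=
    (hPb _ hk).trans (Subgroup.zpowers_le.2 (h.right_mem k hk))
  have hcard k (hk : k + 1 < n) : Nat.card (P k).1 ≠ Nat.card (P (k + 1)).1 := by
    intro heq
    refine hPcard k (by lia) hk ?_
    rw [heq, ← Nat.card_zpowers]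
    exact Subgroup.card_dvd_of_le (hPb _ hk)
  refine ⟨P, fun k hk => ⟨hcard k hk, ?_⟩, fun k hk heq => hcard k (by lia) ?_⟩
  · exact (hP_left k (by lia)).trans ((Subgroup.le_centralizer _).trans
      (Subgroup.centralizer_le (hP_right k hk)))
  · have hP_inf : (P k).1 ≤ Subgroup.zpowers (t k) ⊓ Subgroup.zpowers (t (k + 1)) :=
      le_inf (hP_left k (by lia)) (heq ▸ hP_right (k + 1) hk)
    rw [eq_of_le_inf_zpowers hG (h.top_notMem k (by lia) (k + 1) (by lia) (by lia))
      (h.top_notMem (k + 1) (by lia) k (by lia) (by lia)) hP_inf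
      (le_inf (hP_right k (by lia)) (hP_left (k + 1) (by lia)))]

theorem le_nine [Finite G] (h : IsFence n b t) (hG : IsChordal (powerGraph G)) : n ≤ 9 := by
  by_contra! hn
  obtain ⟨P, hadj, hne⟩ := h.exists_nonbacktracking hG (by lia)
  have hacyclic := isAcyclic_primeCommutingGraph hG
  obtain ⟨hreach, hdist⟩ := dist_eq_of_nonbacktracking hacyclic (n := n - 1)
    (fun k hk => hadj k (by lia)) (fun k hk => hne k (by lia)) (n - 1) le_rfl
  have hle := dist_le_eight_of_reachable hacyclic hreach
  lia

end IsFence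

end Fences

section InducedPaths

/-- The vertices `f 0, …, f (m - 1)` form an induced path of `Γ` in this order; values of `f` at
indices `≥ m` are irrelevant. -/
structure IsInducedPath {V : Type*} (Γ : SimpleGraph V) (m : ℕ) (f : ℕ → V) : Prop where
  injOn : Set.InjOn f (Set.Iio m)
  adj_iff : ∀ i < m, ∀ j < m, (Γ.Adj (f i) (f j) ↔ i + 1 = j ∨ j + 1 = i)

theorem exists_isInducedPath_of_embedding {V : Type*} {Γ : SimpleGraph V} {m L : ℕ}
    (e : pathGraph L ↪g Γ) (hm : 0 < m) (hmL : m ≤ L) : ∃ f, IsInducedPath Γ m f := by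
  have e_eq {i : ℕ} (hi : i < m) : min i (L - 1) = i := by lia
  refine ⟨fun i => e ⟨min i (L - 1), by lia⟩, fun i hi j hj hij => ?_, fun i hi j hj => ?_⟩
  · simpa [e_eq hi, e_eq hj] using e.injective hij
  · simp only [e.map_adj_iff, pathGraph_adj, e_eq hi, e_eq hj]

namespace IsInducedPath

theorem reverse {V : Type*} {Γ : SimpleGraph V} {m : ℕ} {f : ℕ → V} (h : IsInducedPath Γ m f) :
    IsInducedPath Γ m fun i => f (m - 1 - i) where
  injOn i hi j hj hij := by
    have hi : i < m := hi
    have hj : j < m := hj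
    have := h.injOn (show m - 1 - i < m by lia) (show m - 1 - j < m by lia) hij
    lia
  adj_iff i hi j hj := by
    rw [h.adj_iff _ (by lia) _ (by lia)]
    lia

variable {G : Type*} [Group G] {m n i j : ℕ} {f : ℕ → G}

theorem notMem_zpowers (h : IsInducedPath (powerGraph G) m f) (hi : i < m) (hj : j < m)
    (hij : i + 2 ≤ j ∨ j + 2 ≤ i) : f i ∉ Subgroup.zpowers (f j) := by
  intro hmem
  have hne : f i ≠ f j := h.injOn.ne hi hj (by lia)
  have := (h.adj_iff i hi j hj).1 (powerGraph_adj.2 ⟨hne, .inl hmem⟩)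
  lia

theorem mem_zpowers_or_mem_zpowers (h : IsInducedPath (powerGraph G) m f) (hi : i + 1 < m) :
    f i ∈ Subgroup.zpowers (f (i + 1)) ∨ f (i + 1) ∈ Subgroup.zpowers (f i) :=
  (powerGraph_adj.1 ((h.adj_iff i (by lia) (i + 1) hi).2 (.inl rfl))).2

theorem descends_of_ascends (h : IsInducedPath (powerGraph G) m f) (hi : i + 2 < m)
    (hup : f i ∈ Subgroup.zpowers (f (i + 1))) : f (i + 2) ∈ Subgroup.zpowers (f (i + 1)) :=
  (h.mem_zpowers_or_mem_zpowers hi).resolve_left fun hup' =>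
    h.notMem_zpowers (by lia) hi (by lia) (Subgroup.zpowers_le.2 hup' hup)

theorem ascends_of_descends (h : IsInducedPath (powerGraph G) m f) (hi : i + 2 < m)
    (hdown : f (i + 1) ∈ Subgroup.zpowers (f i)) : f (i + 1) ∈ Subgroup.zpowers (f (i + 2)) :=
  (h.mem_zpowers_or_mem_zpowers hi).resolve_right fun hdown' =>
    h.notMem_zpowers hi (by lia) (by lia) (Subgroup.zpowers_le.2 hdown hdown')

theorem ascends_even (h : IsInducedPath (powerGraph G) m f)
    (hup : f 0 ∈ Subgroup.zpowers (f 1)) :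
    ∀ k, 2 * k + 1 < m → f (2 * k) ∈ Subgroup.zpowers (f (2 * k + 1))
  | 0, _ => hup
  | k + 1, hk => h.ascends_of_descends (i := 2 * k + 1) hk
      (h.descends_of_ascends (by lia) (h.ascends_even hup k (by lia)))

theorem descends_even (h : IsInducedPath (powerGraph G) m f)
    (hdown : f 1 ∈ Subgroup.zpowers (f 0)) :
    ∀ k, 2 * k + 1 < m → f (2 * k + 1) ∈ Subgroup.zpowers (f (2 * k))
  | 0, _ => hdown
  | k + 1, hk => h.descends_of_ascends (i := 2 * k + 1) hk
      (h.ascends_of_descends (by lia) (h.descends_even hdown k (by lia)))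

theorem isFence (h : IsInducedPath (powerGraph G) (2 * n) f)
    (hup : f 0 ∈ Subgroup.zpowers (f 1)) :
    IsFence n (fun k => f (2 * k)) (fun k => f (2 * k + 1)) where
  left_mem k hk := h.ascends_even hup k (by lia)
  right_mem k hk := h.descends_of_ascends (by lia) (h.ascends_even hup k (by lia))
  bottom_notMem k hk l hl hkl := h.notMem_zpowers (by lia) (by lia) (by lia)
  top_notMem k hk l hl hkl := h.notMem_zpowers (by lia) (by lia) (by lia)

theorem exists_isFence (h : IsInducedPath (powerGraph G) (2 * n) f) (hn : 0 < n) :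
    ∃ b t : ℕ → G, IsFence n b t := by
  rcases h.mem_zpowers_or_mem_zpowers (i := 0) (by lia) with hup | hdown
  · exact ⟨_, _, h.isFence hup⟩
  · obtain ⟨k, rfl⟩ : ∃ k, n = k + 1 := ⟨n - 1, by lia⟩
    exact ⟨_, _, h.reverse.isFence (h.descends_even hdown k (by lia))⟩

end IsInducedPath

end InducedPaths

theorem stmt0 (G : Type*) [Group G] [Fintype G]
    (hchordal : IsChordal (powerGraph G)) (L : ℕ)
    (hpath : Nonempty (SimpleGraph.pathGraph L ↪g powerGraph G)) :
    L ≤ 19 := by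
  by_contra! hL
  obtain ⟨e⟩ := hpath
  obtain ⟨f, hf⟩ := exists_isInducedPath_of_embedding (m := 2 * 10) e (by norm_num) hL
  obtain ⟨b, t, hfence⟩ := hf.exists_isFence (by norm_num)
  exact absurd (hfence.le_nine hchordal) (by norm_num)
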